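/- Let F be a finite field of odd order, B ∈ M_n(F) an invertible symmetric matrix, 𝒞(B) = {g ∈ M_n(F) : g invertible, g·B·gᵀ = B} the corresponding orthogonal group, and let x ∈ 𝒞(B) with det x = 1. Then there exists y ∈ 𝒞(B) with x·y = y·x and det y = −1 if and only if there exist λ ∈ {1, −1} and an odd m ≥ 1 such that the multiplicity of (t−λ)^m as an elementary divisor of x is nonzero. (Equivalently: the 𝒞(B)-conjugacy class of x splits into two distinct classes of the special orthogonal group {g ∈ 𝒞(B) : det g = 1} if and only if x has no elementary divisor (t±1)^m with m odd.) -/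

import Mathlib

open Matrix

/-- The multiplicity of `(t - λ)^m` as an elementary divisor of `X`, computed as
`2·dim ker((X−λI)^m) − dim ker((X−λI)^{m+1}) − dim ker((X−λI)^{m−1})` (as an integer). -/
noncomputable def edMultiplicity {F : Type*} [Field F] {n : ℕ}
    (X : Matrix (Fin n) (Fin n) F) (lam : F) (m : ℕ) : ℤ :=
  2 * (Module.finrank F (LinearMap.ker (Matrix.toLin' ((X - lam • 1) ^ m))) : ℤ)
    - (Module.finrank F (LinearMap.ker (Matrix.toLin' ((X - lam • 1) ^ (m + 1)))) : ℤ)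
    - (Module.finrank F (LinearMap.ker (Matrix.toLin' ((X - lam • 1) ^ (m - 1)))) : ℤ)

/-!
An isometry `g` of a nondegenerate form `b` satisfies `b ((g + 1) u) (g v) = b u ((g + 1) v)`, so
`det g * det (g + 1) = det (g + 1)`, and `det g = 1` unless `-1` is an eigenvalue. Splitting off the
generalized eigenspace of `-1`, which is nondegenerate, gives `det g = (-1) ^ d` with `d` the
dimension of that space.

If `y` is an isometry commuting with `g` and `det y = -1`, its generalized `-1`-eigenspace `W` is
`g`-stable, nondegenerate and of odd dimension. Comparing `det (-g) = -det g` on `W` shows that a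
generalized `±1`-eigenspace of `g` in `W` has odd dimension, hence contains a Jordan block of odd
size.

Conversely, put `N = g - μ` with `μ = ±1`. A Jordan block of odd size `m` yields `u` with
`N ^ m u = 0` and `b u (N ^ (m - 1) u) ≠ 0`. The span of `u, N u, …, N ^ (m - 1) u` is then
`g`-stable, nondegenerate and of odd dimension `m`, and the involution that is `-1` on it and `1` on
its orthogonal complement is an isometry of determinant `-1` commuting with `g`.

A matrix `y` with `y * B * yᵀ = B` is an isometry of the form `B` through `yᵀ` acting on columns.
-/

open Module (End finrank)
open LinearMap (BilinForm ker range)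

section Ring

variable {R M : Type*} [CommRing R] [AddCommGroup M] [Module R M]

theorem coe_restrict_sub_smul_pow_apply {f : End R M} {p : Submodule R M}
    (hp : ∀ v ∈ p, f v ∈ p) (μ : R) (k : ℕ) (w : p) :
    (((f.restrict hp - μ • 1) ^ k) w : M) = ((f - μ • 1) ^ k) w := by
  induction k with
  | zero => rfl
  | succ k ih => rw [pow_succ', pow_succ', Module.End.mul_apply, Module.End.mul_apply, ← ih]; rfl

theorem sub_smul_pow_apply_mem {f : End R M} {p : Submodule R M} (hp : ∀ v ∈ p, f v ∈ p)
    (μ : R) (k : ℕ) : ∀ v ∈ p, ((f - μ • 1) ^ k) v ∈ p := fun v hv ↦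
  coe_restrict_sub_smul_pow_apply hp μ k ⟨v, hv⟩ ▸ Subtype.property _

theorem maxGenEigenspace_neg (f : End R M) (μ : R) :
    (-f).maxGenEigenspace (-μ) = f.maxGenEigenspace μ := by
  have hneg : -f - (-μ) • 1 = -(f - μ • 1) := by module
  ext v
  simp only [Module.End.mem_maxGenEigenspace, hneg]
  refine exists_congr fun k ↦ ?_
  rcases k.even_or_odd with hk | hk
  · rw [hk.neg_pow]
  · rw [hk.neg_pow, LinearMap.neg_apply, neg_eq_zero]

variable {b : BilinForm R M} {g : End R M} {μ : R}

theorem isOrthogonal_neg (hg : b.IsOrthogonal g) : b.IsOrthogonal ⇑(-g) := fun u v ↦ by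
  simp only [LinearMap.neg_apply, map_neg, neg_neg, hg u v]

theorem isOrthogonal_pow (hg : b.IsOrthogonal g) (k : ℕ) : b.IsOrthogonal ⇑(g ^ k) := by
  induction k with
  | zero => exact fun _ _ ↦ rfl
  | succ k ih =>
    intro u v
    rw [pow_succ', Module.End.mul_apply, Module.End.mul_apply, hg, ih]

theorem isOrthogonal_restrict (hg : b.IsOrthogonal g) {p : Submodule R M}
    (hp : ∀ v ∈ p, g v ∈ p) : (b.restrict p).IsOrthogonal (g.restrict hp) := fun u v ↦ hg u v

theorem injective_of_isOrthogonal (hb : b.Nondegenerate) (hg : b.IsOrthogonal g) :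
    Function.Injective g :=
  (injective_iff_map_eq_zero g).2 fun u hu ↦ hb.1 u fun v ↦ by
    rw [← hg, hu, map_zero, LinearMap.zero_apply]

-- Up to sign, `g - μ` has adjoint `g⁻¹ * (g - μ)`; moving `g⁻¹` to the right avoids inverting `g`.
theorem apply_sub_smul_pow (hg : b.IsOrthogonal g) (hμ : μ * μ = 1) (k : ℕ) (u v : M) :
    b (((g - μ • 1) ^ k) u) ((g ^ k) v) = (-μ) ^ k * b u (((g - μ • 1) ^ k) v) := by
  have base (u v : M) : b ((g - μ • 1) u) (g v) = -μ * b u ((g - μ • 1) v) := by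
    simp only [LinearMap.sub_apply, LinearMap.smul_apply, Module.End.one_apply, map_sub, map_smul,
      hg u v, smul_eq_mul]
    linear_combination (-b u v) * hμ
  induction k generalizing u v with
  | zero => simp
  | succ k ih =>
    have hcomm : Commute ((g - μ • 1) ^ k) g :=
      ((Commute.refl g).sub_left ((Commute.one_left g).smul_left μ)).pow_left k
    calc b (((g - μ • 1) ^ (k + 1)) u) ((g ^ (k + 1)) v)
        = b (((g - μ • 1) ^ k) ((g - μ • 1) u)) ((g ^ k) (g v)) := by
          simp only [pow_succ, Module.End.mul_apply]
      _ = (-μ) ^ k * b ((g - μ • 1) u) (g (((g - μ • 1) ^ k) v)) := by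
          rw [ih, ← Module.End.mul_apply _ g, hcomm.eq, Module.End.mul_apply]
      _ = (-μ) ^ (k + 1) * b u (((g - μ • 1) ^ (k + 1)) v) := by
          rw [base, ← mul_assoc, ← pow_succ, ← Module.End.mul_apply, ← pow_succ']

theorem apply_sub_smul_pow_comm (hg : b.IsOrthogonal g) (hμ : μ * μ = 1) {j : ℕ} (hj : Even j)
    {u : M} (hu : ((g - μ • 1) ^ (j + 1)) u = 0) (v : M) :
    b (((g - μ • 1) ^ j) u) v = b u (((g - μ • 1) ^ j) v) := by
  have hμj : μ ^ j = 1 := by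
    obtain ⟨i, rfl⟩ := hj
    rw [pow_add, ← mul_pow, hμ, one_pow]
  have heigen : g (((g - μ • 1) ^ j) u) = μ • ((g - μ • 1) ^ j) u := by
    rwa [pow_succ', Module.End.mul_apply, LinearMap.sub_apply, sub_eq_zero] at hu
  have hpow (i : ℕ) : (g ^ i) (((g - μ • 1) ^ j) u) = μ ^ i • ((g - μ • 1) ^ j) u := by
    induction i with
    | zero => simp
    | succ i ih => rw [pow_succ', Module.End.mul_apply, ih, map_smul, heigen, smul_smul, ← pow_succ]
  have hfix : (g ^ j) (((g - μ • 1) ^ j) u) = ((g - μ • 1) ^ j) u := by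
    rw [hpow, hμj, one_smul]
  calc b (((g - μ • 1) ^ j) u) v
      = b ((g ^ j) (((g - μ • 1) ^ j) u)) ((g ^ j) v) := (isOrthogonal_pow hg j _ _).symm
    _ = b (((g - μ • 1) ^ j) u) ((g ^ j) v) := by rw [hfix]
    _ = b u (((g - μ • 1) ^ j) v) := by
        rw [apply_sub_smul_pow hg hμ, hj.neg_pow, hμj, one_mul]

/-- The involution that is `-1` on `p` and `1` on a complement `q` of `p`. With `q` the orthogonal
complement of `p` it is an isometry. -/
noncomputable def complReflection {p q : Submodule R M} (h : IsCompl p q) : End R M :=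
  LinearMap.ofIsCompl h (-p.subtype) q.subtype

section complReflection

variable {p q : Submodule R M} (h : IsCompl p q)

theorem complReflection_apply_left {u : M} (hu : u ∈ p) : complReflection h u = -u :=
  LinearMap.ofIsCompl_apply_left h ⟨u, hu⟩

theorem complReflection_apply_right {v : M} (hv : v ∈ q) : complReflection h v = v :=
  LinearMap.ofIsCompl_apply_right h ⟨v, hv⟩

theorem commute_complReflection (hp : ∀ v ∈ p, g v ∈ p) (hq : ∀ v ∈ q, g v ∈ q) :
    Commute g (complReflection h) := by
  ext w
  obtain ⟨u, v, hu, hv, rfl⟩ := Submodule.codisjoint_iff_exists_add_eq.1 h.codisjoint w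
  simp only [Module.End.mul_apply, map_add, complReflection_apply_left h hu,
    complReflection_apply_right h hv, complReflection_apply_left h (hp u hu),
    complReflection_apply_right h (hq v hv), map_neg]

theorem isOrthogonal_complReflection (hb : b.IsRefl) (h : IsCompl p (b.orthogonal p)) :
    b.IsOrthogonal (complReflection h) := by
  intro w w'
  obtain ⟨u, v, hu, hv, rfl⟩ := Submodule.codisjoint_iff_exists_add_eq.1 h.codisjoint w
  obtain ⟨u', v', hu', hv', rfl⟩ := Submodule.codisjoint_iff_exists_add_eq.1 h.codisjoint w'
  have huv' : b u v' = 0 := hv' u hu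
  have hvu' : b v u' = 0 := hb _ _ (hv u' hu')
  simp only [map_add, LinearMap.add_apply, complReflection_apply_left h hu,
    complReflection_apply_left h hu', complReflection_apply_right h hv,
    complReflection_apply_right h hv', map_neg, LinearMap.neg_apply, huv', hvu', add_zero,
    zero_add, neg_neg, neg_zero]

end complReflection

theorem det_mul_det_add_one [IsDomain R] [Module.Free R M] [Module.Finite R M]
    (hb : b.Nondegenerate) (hg : b.IsOrthogonal g) :
    LinearMap.det g * LinearMap.det (g + 1) = LinearMap.det (g + 1) := by
  let e := Module.Free.chooseBasis R M
  have hcomp : b.comp (g + 1) g = b.comp 1 (g + 1) := by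
    ext u v
    simp [hg u v, add_comm]
  have hdet := congrArg (fun c ↦ (LinearMap.BilinForm.toMatrix e c).det) hcomp
  simp only [LinearMap.BilinForm.toMatrix_comp e e, det_mul, det_transpose, LinearMap.det_toMatrix,
    map_one, one_mul] at hdet
  refine mul_left_cancel₀ ((LinearMap.BilinForm.nondegenerate_iff_det_ne_zero e).1 hb) ?_
  linear_combination hdet

/-- The Krylov subspace spanned by `u, N u, …, N ^ (m - 1) u`. For `N ^ m u = 0` it is `N`-stable,
and it serves as the odd-dimensional space to be negated. -/
def krylovSubspace (N : End R M) (m : ℕ) (u : M) : Submodule R M :=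
  Submodule.span R (Set.range fun i : Fin m ↦ (N ^ (i : ℕ)) u)

section krylovSubspace

variable {N : End R M} {m : ℕ} {u : M}

theorem pow_apply_mem_krylovSubspace (hu : (N ^ m) u = 0) (i : ℕ) :
    (N ^ i) u ∈ krylovSubspace N m u := by
  by_cases hi : i < m
  · exact Submodule.subset_span ⟨⟨i, hi⟩, rfl⟩
  · rw [Module.End.pow_map_zero_of_le (not_lt.1 hi) hu]
    exact Submodule.zero_mem _

theorem apply_mem_krylovSubspace (hu : (N ^ m) u = 0) :
    ∀ v ∈ krylovSubspace N m u, N v ∈ krylovSubspace N m u := by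
  suffices krylovSubspace N m u ≤ (krylovSubspace N m u).comap N from this
  refine Submodule.span_le.2 ?_
  rintro _ ⟨i, rfl⟩
  rw [SetLike.mem_coe, Submodule.mem_comap, ← Module.End.mul_apply, ← pow_succ']
  exact pow_apply_mem_krylovSubspace hu _

theorem exists_pow_sum_eq_smul (hu : (N ^ m) u = 0) {c : Fin m → R} (hc : c ≠ 0) :
    ∃ i k, c i ≠ 0 ∧ (N ^ k) (∑ l, c l • (N ^ (l : ℕ)) u) = c i • (N ^ (m - 1)) u := by
  obtain ⟨i, hi, hmin⟩ := WellFounded.has_min (wellFounded_lt (α := Fin m)) {i | c i ≠ 0}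
    (Function.ne_iff.1 hc)
  refine ⟨i, m - 1 - i, hi, ?_⟩
  simp only [map_sum, map_smul, ← Module.End.mul_apply, ← pow_add]
  rw [Finset.sum_eq_single i _ (by simp), Nat.sub_add_cancel (by omega)]
  intro l _ hl
  rcases lt_or_gt_of_ne hl with hli | hil
  · rw [not_not.1 fun h ↦ hmin l h hli, zero_smul]
  · rw [Module.End.pow_map_zero_of_le (by omega) hu, smul_zero]

end krylovSubspace

end Ring

section Field

variable {F V : Type*} [Field F] [AddCommGroup V] [Module F V]

/-- The endomorphism `f` has a Jordan block of size `m` for the eigenvalue `μ`: some `v` killed by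
`(f - μ) ^ m` starts a Jordan chain of length `m` whose last vector ends no longer chain. This never
holds for `m = 0`. -/
def HasJordanBlock (f : End F V) (μ : F) (m : ℕ) : Prop :=
  ∃ v, ((f - μ • 1) ^ m) v = 0 ∧ ((f - μ • 1) ^ (m - 1)) v ∉ range ((f - μ • 1) ^ m)

theorem HasJordanBlock.of_restrict {f : End F V} {p q : Submodule F V} (hpq : IsCompl p q)
    (hp : ∀ v ∈ p, f v ∈ p) (hq : ∀ v ∈ q, f v ∈ q) {μ : F} {m : ℕ}
    (h : HasJordanBlock (f.restrict hp) μ m) : HasJordanBlock f μ m := by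
  obtain ⟨w, hw, hwr⟩ := h
  refine ⟨w, by rw [← coe_restrict_sub_smul_pow_apply hp, hw, Submodule.coe_zero], ?_⟩
  rintro ⟨v, hv⟩
  obtain ⟨a, c, ha, hc, rfl⟩ := Submodule.codisjoint_iff_exists_add_eq.1 hpq.codisjoint v
  rw [map_add] at hv
  have hcp : ((f - μ • 1) ^ m) c ∈ p := by
    rw [← add_sub_cancel_left (((f - μ • 1) ^ m) a) (((f - μ • 1) ^ m) c), hv]
    exact p.sub_mem (sub_smul_pow_apply_mem hp μ _ w w.2) (sub_smul_pow_apply_mem hp μ _ a ha)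
  have hc0 : ((f - μ • 1) ^ m) c = 0 :=
    Submodule.disjoint_def.1 hpq.disjoint _ hcp (sub_smul_pow_apply_mem hq μ _ c hc)
  refine hwr ⟨⟨a, ha⟩, Subtype.ext ?_⟩
  rw [coe_restrict_sub_smul_pow_apply, coe_restrict_sub_smul_pow_apply, ← hv, hc0, add_zero]

theorem det_eq_det_restrict_mul_det_restrict [FiniteDimensional F V] {f : End F V}
    {p q : Submodule F V} (hpq : IsCompl p q) (hp : ∀ v ∈ p, f v ∈ p) (hq : ∀ v ∈ q, f v ∈ q) :
    LinearMap.det f = LinearMap.det (f.restrict hp) * LinearMap.det (f.restrict hq) := by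
  let e := Submodule.prodEquivOfIsCompl p q hpq
  have hcomp : f ∘ₗ e = e ∘ₗ (f.restrict hp).prodMap (f.restrict hq) := by
    ext v <;> simp [e]
  rw [← LinearMap.det_prodMap, ← LinearMap.det_conj _ e, ← LinearMap.comp_assoc, ← hcomp,
    LinearMap.comp_assoc, LinearEquiv.comp_symm, LinearMap.comp_id]

theorem det_complReflection [FiniteDimensional F V] {p q : Submodule F V} (h : IsCompl p q) :
    LinearMap.det (complReflection h) = (-1) ^ finrank F p := by
  have hp : ∀ v ∈ p, complReflection h v ∈ p := fun v hv ↦ by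
    simpa only [complReflection_apply_left h hv] using p.neg_mem hv
  have hq : ∀ v ∈ q, complReflection h v ∈ q := fun v hv ↦ by
    rwa [complReflection_apply_right h hv]
  have hrp : (complReflection h).restrict hp = (-1 : F) • 1 := by
    ext v
    simp [complReflection_apply_left h v.2]
  have hrq : (complReflection h).restrict hq = 1 := by
    ext v
    simp [complReflection_apply_right h v.2]
  rw [det_eq_det_restrict_mul_det_restrict h hp hq, hrp, hrq, LinearMap.det_smul, map_one, map_one,
    mul_one, mul_one]

theorem det_eq_pow_finrank_of_isNilpotent_sub [FiniteDimensional F V] {f : End F V} {μ : F}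
    (h : IsNilpotent (f - μ • 1)) : LinearMap.det f = μ ^ finrank F V := by
  have hchar := congrArg (Polynomial.eval μ) h.neg.charpoly_eq_X_pow_finrank
  rwa [LinearMap.eval_charpoly, Polynomial.eval_pow, Polynomial.eval_X,
    Algebra.algebraMap_eq_smul_one, sub_neg_eq_add, add_sub_cancel] at hchar

theorem finrank_ker_pow_succ [FiniteDimensional F V] (N : End F V) (j : ℕ) :
    finrank F (ker (N ^ (j + 1))) =
      finrank F (ker (N ^ j)) + finrank F ↥(ker N ⊓ range (N ^ j)) := by
  let φ := (N ^ j).domRestrict (ker (N ^ (j + 1)))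
  have hrange : range φ = ker N ⊓ range (N ^ j) := by
    ext v
    constructor
    · rintro ⟨⟨w, hw⟩, rfl⟩
      exact ⟨by simpa [φ, pow_succ'] using hw, w, rfl⟩
    · rintro ⟨hv, w, rfl⟩
      exact ⟨⟨w, by simpa [pow_succ'] using hv⟩, rfl⟩
  have hle : ker (N ^ j) ≤ ker (N ^ (j + 1)) := by
    rw [pow_succ']
    exact LinearMap.ker_le_ker_comp _ _
  have hker : ker φ = (ker (N ^ j)).comap (ker (N ^ (j + 1))).subtype := rfl
  rw [← LinearMap.finrank_range_add_finrank_ker φ, hrange, hker,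
    (Submodule.comapSubtypeEquivOfLe hle).finrank_eq, add_comm]

theorem hasJordanBlock_succ_iff_finrank_ker_pow [FiniteDimensional F V] {f : End F V} {μ : F}
    {j : ℕ} : HasJordanBlock f μ (j + 1) ↔
      finrank F (ker ((f - μ • 1) ^ (j + 2))) + finrank F (ker ((f - μ • 1) ^ j)) ≠
        2 * finrank F (ker ((f - μ • 1) ^ (j + 1))) := by
  rw [HasJordanBlock, Nat.add_sub_cancel]
  generalize f - μ • 1 = N
  have hle : ker N ⊓ range (N ^ (j + 1)) ≤ ker N ⊓ range (N ^ j) := by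
    rw [pow_succ]
    exact inf_le_inf_left _ (LinearMap.range_comp_le_range _ _)
  have hblock : (∃ v, (N ^ (j + 1)) v = 0 ∧ (N ^ j) v ∉ range (N ^ (j + 1))) ↔
      ¬ ker N ⊓ range (N ^ j) ≤ ker N ⊓ range (N ^ (j + 1)) := by
    constructor
    · rintro ⟨v, hv, hvr⟩ hle'
      exact hvr (hle' ⟨by simpa [pow_succ'] using hv, v, rfl⟩).2
    · intro h
      obtain ⟨_, ⟨hv, v, rfl⟩, hnot⟩ := SetLike.not_le_iff_exists.1 h
      exact ⟨v, by simpa [pow_succ'] using hv, fun hr ↦ hnot ⟨hv, hr⟩⟩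
  have hfinrank : ker N ⊓ range (N ^ j) ≤ ker N ⊓ range (N ^ (j + 1)) ↔
      finrank F ↥(ker N ⊓ range (N ^ j)) = finrank F ↥(ker N ⊓ range (N ^ (j + 1))) :=
    ⟨fun h ↦ by rw [le_antisymm h hle],
      fun h ↦ (Submodule.eq_of_le_of_finrank_eq hle h.symm).ge⟩
  rw [hblock, hfinrank, finrank_ker_pow_succ N (j + 1), finrank_ker_pow_succ N j]
  omega

theorem maxGenEigenspace_eq_ker_pow [FiniteDimensional F V] (f : End F V) (μ : F) {k : ℕ}
    (hk : finrank F V ≤ k) : f.maxGenEigenspace μ = ker ((f - μ • 1) ^ k) := by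
  rw [Module.End.maxGenEigenspace_eq_genEigenspace_finrank,
    ← Module.End.genEigenspace_eq_genEigenspace_finrank_of_le f μ hk, Module.End.genEigenspace_nat]

theorem exists_odd_hasJordanBlock_of_odd_finrank_maxGenEigenspace [FiniteDimensional F V]
    {f : End F V} {μ : F} (h : Odd (finrank F (f.maxGenEigenspace μ))) :
    ∃ m, Odd m ∧ HasJordanBlock f μ m := by
  by_contra! hno
  have heven (k : ℕ) : Even (finrank F (ker ((f - μ • 1) ^ (2 * k)))) := by
    induction k with
    | zero =>
      rw [mul_zero, pow_zero, Module.End.one_eq_id, LinearMap.ker_id, finrank_bot]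
      exact Even.zero
    | succ k ih =>
      have hk := hno (2 * k + 1) (odd_two_mul_add_one k)
      rw [hasJordanBlock_succ_iff_finrank_ker_pow, not_not] at hk
      exact (Nat.even_add.1 (hk ▸ even_two_mul _)).2 ih
  rw [maxGenEigenspace_eq_ker_pow f μ (Nat.le_mul_of_pos_left _ two_pos)] at h
  exact Nat.not_even_iff_odd.2 h (heven _)

section krylovSubspace

variable {N : End F V} {m : ℕ} {u : V}

theorem eq_zero_of_sum_smul_pow_mem (hu : (N ^ m) u = 0) {W : Submodule F V}
    (hW : ∀ v ∈ W, N v ∈ W) (huW : (N ^ (m - 1)) u ∉ W) {c : Fin m → F}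
    (hc : ∑ i, c i • (N ^ (i : ℕ)) u ∈ W) : c = 0 := by
  by_contra hc0
  obtain ⟨i, k, hi, hik⟩ := exists_pow_sum_eq_smul hu hc0
  have hmem := Module.End.pow_apply_mem_of_forall_mem k hW _ hc
  rw [hik] at hmem
  exact huW ((W.smul_mem_iff hi).1 hmem)

theorem disjoint_krylovSubspace (hu : (N ^ m) u = 0) {W : Submodule F V}
    (hW : ∀ v ∈ W, N v ∈ W) (huW : (N ^ (m - 1)) u ∉ W) : Disjoint (krylovSubspace N m u) W := by
  refine Submodule.disjoint_def.2 fun v hv hvW ↦ ?_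
  obtain ⟨c, rfl⟩ := (Submodule.mem_span_range_iff_exists_fun F).1 hv
  simp [eq_zero_of_sum_smul_pow_mem hu hW huW hvW]

theorem finrank_krylovSubspace (hu : (N ^ m) u = 0) (hu' : (N ^ (m - 1)) u ≠ 0) :
    finrank F (krylovSubspace N m u) = m := by
  have hli : LinearIndependent F fun i : Fin m ↦ (N ^ (i : ℕ)) u :=
    Fintype.linearIndependent_iff.2 fun c hc ↦ congrFun <|
      eq_zero_of_sum_smul_pow_mem hu (W := ⊥) (by simp) (by simpa using hu') (by simpa using hc)
  rw [krylovSubspace, finrank_span_eq_card hli, Fintype.card_fin]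

end krylovSubspace

variable [FiniteDimensional F V] {b : BilinForm F V} {g : End F V} {μ : F}

theorem apply_mem_orthogonal_of_isOrthogonal (hb : b.Nondegenerate) (hg : b.IsOrthogonal g)
    {U : Submodule F V} (hU : ∀ u ∈ U, g u ∈ U) : ∀ v ∈ b.orthogonal U, g v ∈ b.orthogonal U := by
  intro v hv u hu
  have hinj : Function.Injective (g.restrict hU) := fun x y hxy ↦
    Subtype.ext (injective_of_isOrthogonal hb hg (congrArg Subtype.val hxy))
  obtain ⟨w, hw⟩ := LinearMap.surjective_of_injective hinj ⟨u, hu⟩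
  obtain rfl : g w = u := congrArg Subtype.val hw
  exact (hg w v).trans (hv w w.2)

theorem orthogonal_range_sub_smul_pow (hb : b.Nondegenerate) (hs : b.IsRefl)
    (hg : b.IsOrthogonal g) (hμ : μ * μ = 1) (k : ℕ) :
    b.orthogonal (range ((g - μ • 1) ^ k)) = ker ((g - μ • 1) ^ k) := by
  have hμk : (-μ) ^ k ≠ 0 := pow_ne_zero _ (neg_ne_zero.2 (left_ne_zero_of_mul_eq_one hμ))
  have hsurj : Function.Surjective (g ^ k) :=
    LinearMap.surjective_of_injective (injective_of_isOrthogonal hb (isOrthogonal_pow hg k))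
  ext u
  calc u ∈ b.orthogonal (range ((g - μ • 1) ^ k))
      ↔ ∀ v, b u (((g - μ • 1) ^ k) v) = 0 := by
        simp only [LinearMap.BilinForm.mem_orthogonal_iff, LinearMap.mem_range,
          forall_exists_index, forall_apply_eq_imp_iff]
        exact forall_congr' fun v ↦ hs.eq_iff
    _ ↔ ∀ v, b (((g - μ • 1) ^ k) u) ((g ^ k) v) = 0 := by
        simp only [apply_sub_smul_pow hg hμ, mul_eq_zero, hμk, false_or]
    _ ↔ ∀ v, b (((g - μ • 1) ^ k) u) v = 0 :=
        (hsurj.forall (p := fun v ↦ b (((g - μ • 1) ^ k) u) v = 0)).symm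
    _ ↔ u ∈ ker ((g - μ • 1) ^ k) :=
        ⟨hb.1 _, fun h v ↦ by rw [LinearMap.mem_ker.1 h, map_zero, LinearMap.zero_apply]⟩

theorem orthogonal_ker_sub_smul_pow (hb : b.Nondegenerate) (hs : b.IsRefl)
    (hg : b.IsOrthogonal g) (hμ : μ * μ = 1) (k : ℕ) :
    b.orthogonal (ker ((g - μ • 1) ^ k)) = range ((g - μ • 1) ^ k) := by
  rw [← orthogonal_range_sub_smul_pow hb hs hg hμ, BilinForm.orthogonal_orthogonal hb hs]

theorem isCompl_maxGenEigenspace_orthogonal (hb : b.Nondegenerate) (hs : b.IsRefl)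
    (hg : b.IsOrthogonal g) (hμ : μ * μ = 1) :
    IsCompl (g.maxGenEigenspace μ) (b.orthogonal (g.maxGenEigenspace μ)) := by
  obtain ⟨k, hc, hk⟩ := ((g - μ • 1).eventually_isCompl_ker_pow_range_pow.and
    (Filter.eventually_ge_atTop (finrank F V))).exists
  rwa [maxGenEigenspace_eq_ker_pow g μ hk, orthogonal_ker_sub_smul_pow hb hs hg hμ]

theorem det_eq_neg_one_pow_finrank_maxGenEigenspace (hb : b.Nondegenerate) (hs : b.IsRefl)
    (hg : b.IsOrthogonal g) :
    LinearMap.det g = (-1) ^ finrank F (g.maxGenEigenspace (-1)) := by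
  set W := g.maxGenEigenspace (-1)
  have hc : IsCompl W (b.orthogonal W) :=
    isCompl_maxGenEigenspace_orthogonal hb hs hg (by simp)
  have hW : ∀ v ∈ W, g v ∈ W := Module.End.mapsTo_maxGenEigenspace_of_comm (Commute.refl g) (-1)
  have hW' := apply_mem_orthogonal_of_isOrthogonal hb hg hW
  have hdetW : LinearMap.det (g.restrict hW) = (-1) ^ finrank F W := by
    refine det_eq_pow_finrank_of_isNilpotent_sub ⟨finrank F V, LinearMap.ext fun w ↦ Subtype.ext ?_⟩
    rw [coe_restrict_sub_smul_pow_apply]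
    exact (maxGenEigenspace_eq_ker_pow g (-1) le_rfl).le w.2
  have hdetW' : LinearMap.det (g.restrict hW') = 1 := by
    have hnd : (b.restrict (b.orthogonal W)).Nondegenerate := by
      rw [BilinForm.restrict_nondegenerate_iff_isCompl_orthogonal hs,
        BilinForm.orthogonal_orthogonal hb hs]
      exact hc.symm
    refine (mul_eq_right₀ ?_).1 (det_mul_det_add_one hnd (isOrthogonal_restrict hg hW'))
    refine ((LinearMap.not_hasEigenvalue_zero_tfae _).out 3 5).2 fun w hw ↦ Subtype.ext ?_
    refine Submodule.disjoint_def.1 hc.disjoint w ?_ w.2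
    refine (Module.End.mem_maxGenEigenspace g (-1) w).2 ⟨1, ?_⟩
    simpa using congrArg Subtype.val hw
  rw [det_eq_det_restrict_mul_det_restrict hc hW hW', hdetW, hdetW', mul_one]

theorem exists_odd_finrank_maxGenEigenspace (h2 : (2 : F) ≠ 0) (hb : b.Nondegenerate)
    (hs : b.IsRefl) (hg : b.IsOrthogonal g) (hV : Odd (finrank F V)) :
    ∃ μ : F, (μ = 1 ∨ μ = -1) ∧ Odd (finrank F (g.maxGenEigenspace μ)) := by
  by_contra! heven
  simp only [Nat.not_odd_iff_even] at heven
  have hdet : LinearMap.det g = 1 := by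
    rw [det_eq_neg_one_pow_finrank_maxGenEigenspace hb hs hg, (heven _ (.inr rfl)).neg_one_pow]
  have hdet_neg : LinearMap.det (-g) = 1 := by
    rw [det_eq_neg_one_pow_finrank_maxGenEigenspace hb hs (isOrthogonal_neg hg),
      maxGenEigenspace_neg, (heven _ (.inl rfl)).neg_one_pow]
  rw [← neg_one_smul F g, LinearMap.det_smul, hdet, hV.neg_one_pow] at hdet_neg
  exact h2 (by linear_combination -hdet_neg)

theorem exists_odd_hasJordanBlock_of_commute (h2 : (2 : F) ≠ 0) (hb : b.Nondegenerate)
    (hs : b.IsRefl) (hg : b.IsOrthogonal g) {y : End F V} (hy : b.IsOrthogonal y)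
    (hgy : Commute g y) (hdet : LinearMap.det y = -1) :
    ∃ μ : F, (μ = 1 ∨ μ = -1) ∧ ∃ m, Odd m ∧ HasJordanBlock g μ m := by
  set W := y.maxGenEigenspace (-1)
  have hc : IsCompl W (b.orthogonal W) :=
    isCompl_maxGenEigenspace_orthogonal hb hs hy (by simp)
  have hW : ∀ v ∈ W, g v ∈ W := Module.End.mapsTo_maxGenEigenspace_of_comm hgy.symm (-1)
  have hW' := apply_mem_orthogonal_of_isOrthogonal hb hg hW
  have hnd := (BilinForm.restrict_nondegenerate_iff_isCompl_orthogonal hs).2 hc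
  have hodd : Odd (finrank F W) := by
    by_contra heven
    rw [det_eq_neg_one_pow_finrank_maxGenEigenspace hb hs hy,
      (Nat.not_odd_iff_even.1 heven).neg_one_pow] at hdet
    exact h2 (by linear_combination hdet)
  obtain ⟨μ, hμ, hμodd⟩ := exists_odd_finrank_maxGenEigenspace h2 hnd
    (fun u v ↦ hs u v) (isOrthogonal_restrict hg hW) hodd
  obtain ⟨m, hm, hblock⟩ := exists_odd_hasJordanBlock_of_odd_finrank_maxGenEigenspace hμodd
  exact ⟨μ, hμ, m, hm, hblock.of_restrict hc hW hW'⟩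

-- For odd `m` the form `(u, v) ↦ b ((g - μ) ^ (m - 1) u) v` on `ker ((g - μ) ^ m)` is symmetric, so
-- it vanishes as soon as it vanishes on the diagonal.
theorem HasJordanBlock.exists_apply_pow_ne_zero (h2 : (2 : F) ≠ 0) (hb : b.Nondegenerate)
    (hs : b.IsSymm) (hg : b.IsOrthogonal g) (hμ : μ * μ = 1) {m : ℕ} (hm : Odd m)
    (h : HasJordanBlock g μ m) :
    ∃ u, ((g - μ • 1) ^ m) u = 0 ∧ b u (((g - μ • 1) ^ (m - 1)) u) ≠ 0 := by
  obtain ⟨j, hj, rfl⟩ : ∃ j, Even j ∧ m = j + 1 := by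
    obtain ⟨i, rfl⟩ := hm
    exact ⟨2 * i, even_two_mul i, rfl⟩
  obtain ⟨v, hv, hvr⟩ := h
  rw [Nat.add_sub_cancel] at hvr ⊢
  by_contra! hdiag
  refine hvr ?_
  rw [← orthogonal_ker_sub_smul_pow hb hs.isRefl hg hμ, BilinForm.mem_orthogonal_iff]
  intro u hu
  rw [LinearMap.mem_ker] at hu
  have hcomm : b v (((g - μ • 1) ^ j) u) = b u (((g - μ • 1) ^ j) v) := by
    rw [← apply_sub_smul_pow_comm hg hμ hj hv, hs.eq]
  have hsum := hdiag (u + v) (by rw [map_add, hu, hv, add_zero])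
  simp only [map_add, LinearMap.add_apply, hdiag u hu, hdiag v hv, hcomm] at hsum
  refine (mul_eq_zero.1 ?_).resolve_left h2
  linear_combination hsum

theorem exists_commute_det_eq_neg_one_of_odd_hasJordanBlock (h2 : (2 : F) ≠ 0)
    (hb : b.Nondegenerate) (hs : b.IsSymm) (hg : b.IsOrthogonal g) (hμ : μ * μ = 1) {m : ℕ}
    (hm : Odd m) (h : HasJordanBlock g μ m) :
    ∃ y : End F V, b.IsOrthogonal y ∧ Commute g y ∧ LinearMap.det y = -1 := by
  obtain ⟨u, hu, hbu⟩ := h.exists_apply_pow_ne_zero h2 hb hs hg hμ hm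
  set U := krylovSubspace (g - μ • 1) m u
  have hU : ∀ v ∈ U, g v ∈ U := fun v hv ↦ by
    rw [← sub_add_cancel (g v) (μ • v)]
    exact U.add_mem (apply_mem_krylovSubspace hu v hv) (U.smul_mem μ hv)
  have hU' := apply_mem_orthogonal_of_isOrthogonal hb hg hU
  have hc : IsCompl U (b.orthogonal U) := by
    rw [BilinForm.isCompl_orthogonal_iff_disjoint hs.isRefl]
    refine disjoint_krylovSubspace hu ?_ fun hmem ↦
      hbu (hmem u (pow_apply_mem_krylovSubspace hu 0))
    simpa only [pow_one] using sub_smul_pow_apply_mem hU' μ 1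
  have hfinrank : finrank F U = m :=
    finrank_krylovSubspace hu fun h0 ↦ hbu (by rw [h0, map_zero])
  exact ⟨complReflection hc, isOrthogonal_complReflection hs.isRefl hc,
    commute_complReflection hc hU hU', by rw [det_complReflection, hfinrank, hm.neg_one_pow]⟩

theorem exists_commute_det_eq_neg_one_iff_odd_hasJordanBlock (h2 : (2 : F) ≠ 0)
    (hb : b.Nondegenerate) (hs : b.IsSymm) (hg : b.IsOrthogonal g) :
    (∃ y : End F V, b.IsOrthogonal y ∧ Commute g y ∧ LinearMap.det y = -1) ↔
      ∃ μ : F, (μ = 1 ∨ μ = -1) ∧ ∃ m, Odd m ∧ HasJordanBlock g μ m := by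
  constructor
  · rintro ⟨y, hy, hgy, hdet⟩
    exact exists_odd_hasJordanBlock_of_commute h2 hb hs.isRefl hg hy hgy hdet
  · rintro ⟨μ, hμ, m, hm, hblock⟩
    exact exists_commute_det_eq_neg_one_of_odd_hasJordanBlock h2 hb hs hg
      (mul_self_eq_one_iff.2 hμ) hm hblock

end Field

section Matrix

theorem isOrthogonal_toLin'_transpose_iff {R ι : Type*} [CommRing R] [Fintype ι] [DecidableEq ι]
    {B y : Matrix ι ι R} : B.toBilin'.IsOrthogonal (toLin' yᵀ) ↔ y * B * yᵀ = B := by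
  have hcomp := toBilin'_comp B yᵀ yᵀ
  rw [transpose_transpose] at hcomp
  rw [← toBilin'.injective.eq_iff, ← hcomp, LinearMap.ext_iff₂]
  rfl

theorem commute_toLin'_transpose_iff {R ι : Type*} [CommSemiring R] [Fintype ι] [DecidableEq ι]
    {x y : Matrix ι ι R} : Commute (toLin' xᵀ) (toLin' yᵀ) ↔ x * y = y * x := by
  rw [commute_iff_eq, Module.End.mul_eq_comp, Module.End.mul_eq_comp, ← toLin'_mul, ← toLin'_mul,
    toLin'.injective.eq_iff, ← transpose_mul, ← transpose_mul, transpose_inj, eq_comm]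

theorem finrank_ker_toLin'_transpose {F ι : Type*} [Field F] [Fintype ι] [DecidableEq ι]
    (A : Matrix ι ι F) : finrank F (ker (toLin' Aᵀ)) = finrank F (ker (toLin' A)) := by
  have hrank (A : Matrix ι ι F) : A.rank + finrank F (ker (toLin' A)) = finrank F (ι → F) :=
    LinearMap.finrank_range_add_finrank_ker (toLin' A)
  exact Nat.add_left_cancel (n := A.rank) (by rw [hrank, ← rank_transpose A, hrank])

variable {F : Type*} [Field F] {n : ℕ}

theorem edMultiplicity_transpose (X : Matrix (Fin n) (Fin n) F) (lam : F) (m : ℕ) :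
    edMultiplicity Xᵀ lam m = edMultiplicity X lam m := by
  have htranspose (k : ℕ) : (Xᵀ - lam • 1) ^ k = ((X - lam • 1) ^ k)ᵀ := by
    rw [transpose_pow, transpose_sub, transpose_smul, transpose_one]
  rw [edMultiplicity, edMultiplicity, htranspose, htranspose, htranspose,
    finrank_ker_toLin'_transpose, finrank_ker_toLin'_transpose, finrank_ker_toLin'_transpose]

theorem edMultiplicity_ne_zero_iff_hasJordanBlock (X : Matrix (Fin n) (Fin n) F) (lam : F) {m : ℕ}
    (hm : 1 ≤ m) : edMultiplicity X lam m ≠ 0 ↔ HasJordanBlock (toLin' X) lam m := by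
  obtain ⟨j, rfl⟩ := Nat.exists_eq_add_of_le' hm
  have hpow (k : ℕ) : toLin' ((X - lam • 1) ^ k) = (toLin' X - lam • 1) ^ k := by
    rw [toLin'_pow, map_sub, map_smul, toLin'_one]
    rfl
  rw [hasJordanBlock_succ_iff_finrank_ker_pow, edMultiplicity, Nat.add_sub_cancel, hpow, hpow, hpow,
    add_assoc, one_add_one_eq_two]
  refine not_congr ?_
  omega

end Matrix

theorem orthogonal_centralizer_det_neg_one_iff_odd_elementary_divisor_general
    {F : Type*} [Field F] (h2 : (2 : F) ≠ 0) {n : ℕ}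
    (B : Matrix (Fin n) (Fin n) F) (hB : IsUnit B) (hBsym : Bᵀ = B)
    (x : Matrix (Fin n) (Fin n) F) (hxB : x * B * xᵀ = B) :
    (∃ y : Matrix (Fin n) (Fin n) F, IsUnit y ∧ y * B * yᵀ = B ∧
        x * y = y * x ∧ y.det = -1) ↔
      (∃ lam : F, (lam = 1 ∨ lam = -1) ∧
        ∃ m : ℕ, 1 ≤ m ∧ Odd m ∧ edMultiplicity x lam m ≠ 0) := by
  have hb : B.toBilin'.Nondegenerate :=
    BilinForm.nondegenerate_toBilin'_of_det_ne_zero' _ ((isUnit_iff_isUnit_det B).1 hB).ne_zero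
  have hs : B.toBilin'.IsSymm := isSymm_toBilin'_iff_isSymm.2 hBsym
  have hg := isOrthogonal_toLin'_transpose_iff.2 hxB
  calc (∃ y : Matrix (Fin n) (Fin n) F, IsUnit y ∧ y * B * yᵀ = B ∧ x * y = y * x ∧ y.det = -1)
      ↔ ∃ y : End F (Fin n → F), B.toBilin'.IsOrthogonal y ∧ Commute (toLin' xᵀ) y ∧
          LinearMap.det y = -1 := by
        simp only [(toLin'.surjective.comp (transpose_involutive _ _).surjective).exists,
          Function.comp_apply, isOrthogonal_toLin'_transpose_iff, commute_toLin'_transpose_iff,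
          LinearMap.det_toLin', det_transpose]
        exact exists_congr fun y ↦ and_iff_right_of_imp fun h ↦
          (isUnit_iff_isUnit_det y).2 (h.2.2 ▸ isUnit_one.neg)
    _ ↔ ∃ lam : F, (lam = 1 ∨ lam = -1) ∧ ∃ m, Odd m ∧ HasJordanBlock (toLin' xᵀ) lam m :=
        exists_commute_det_eq_neg_one_iff_odd_hasJordanBlock h2 hb hs hg
    _ ↔ ∃ lam : F, (lam = 1 ∨ lam = -1) ∧ ∃ m, 1 ≤ m ∧ Odd m ∧ edMultiplicity x lam m ≠ 0 := by
        refine exists_congr fun lam ↦ and_congr_right fun _ ↦ exists_congr fun m ↦ ?_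
        rw [and_left_comm]
        refine and_congr_right fun hm ↦ ?_
        rw [← edMultiplicity_ne_zero_iff_hasJordanBlock _ _ hm.pos, edMultiplicity_transpose,
          and_iff_right (Nat.succ_le_of_lt hm.pos)]

/-- Let `x` be a determinant-one element of an orthogonal group over a finite field of odd
order.  The orthogonal group contains an element commuting with `x` of determinant `−1` if
and only if `x` has an elementary divisor `(t±1)^m` with `m` odd. -/
theorem orthogonal_centralizer_det_neg_one_iff_odd_elementary_divisor
    {F : Type*} [Field F] [Fintype F] (hodd : Odd (Fintype.card F)) {n : ℕ}
    (B : Matrix (Fin n) (Fin n) F) (hB : IsUnit B) (hBsym : Bᵀ = B)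
    (x : Matrix (Fin n) (Fin n) F) (hx : IsUnit x) (hxB : x * B * xᵀ = B)
    (hdet : x.det = 1) :
    (∃ y : Matrix (Fin n) (Fin n) F, IsUnit y ∧ y * B * yᵀ = B ∧
        x * y = y * x ∧ y.det = -1) ↔
      (∃ lam : F, (lam = 1 ∨ lam = -1) ∧
        ∃ m : ℕ, 1 ≤ m ∧ Odd m ∧ edMultiplicity x lam m ≠ 0) := by
  have h2 : (2 : F) ≠ 0 := Ring.two_ne_zero fun h ↦
    Nat.not_even_iff_odd.2 hodd (Nat.even_iff.2 (FiniteField.even_card_of_char_two h))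
  exact orthogonal_centralizer_det_neg_one_iff_odd_elementary_divisor_general h2 B hB hBsym x hxB
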